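/- Let P be the R-measure, c = (1/2, √3/6), and let ℓ ≥ 1 be a positive integer, so that n = 3^ℓ + 1. Then for every word τ ∈ {1,2,3}^ℓ and every optimal set of two-means α₂ for P, the set { S_ω(c) : ω ∈ {1,2,3}^ℓ, ω ≠ τ } ∪ S_τ(α₂) is an optimal set of n-means for P, where S_τ(α₂) = {S_τ(a) : a ∈ α₂}. -/

import Mathlib

open MeasureTheory ENNReal

noncomputable section

abbrev E2 : Type := EuclideanSpace ℝ (Fin 2)

/-- The point (a, b) of the Euclidean plane. -/
def pt (a b : ℝ) : E2 := (WithLp.equiv 2 (Fin 2 → ℝ)).symm ![a, b]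

/-- S₁(x) = x/3. -/
def S1 : E2 → E2 := fun x => (3 : ℝ)⁻¹ • x

/-- S₂(x) = x/3 + (2/3, 0). -/
def S2 : E2 → E2 := fun x => (3 : ℝ)⁻¹ • x + pt (2/3) 0

/-- S₃(x) = x/3 + (1/3, √3/3). -/
def S3 : E2 → E2 := fun x => (3 : ℝ)⁻¹ • x + pt (1/3) (Real.sqrt 3 / 3)

def Smap : Fin 3 → E2 → E2 := ![S1, S2, S3]

/-- For a word ω = ω₁⋯ω_k ∈ {1,2,3}^k, the composition S_ω = S_{ω₁} ∘ ⋯ ∘ S_{ω_k}. -/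
def Sword {k : ℕ} (ω : Fin k → Fin 3) : E2 → E2 :=
  fun x => (List.ofFn fun i => Smap (ω i)).foldr (fun g y => g y) x

/-- The closed triangle with vertices (0,0), (1,0), (1/2, √3/2). -/
def Tri : Set E2 := convexHull ℝ {pt 0 0, pt 1 0, pt (1/2) (Real.sqrt 3 / 2)}

/-- The distortion error ∫ min_{a ∈ α} ‖x − a‖² dμ of a set α of points. -/
def err (μ : Measure E2) (α : Set E2) : ℝ≥0∞ :=
  ∫⁻ x, ⨅ a ∈ α, ENNReal.ofReal (‖x - a‖ ^ 2) ∂μ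

/-- The n-th quantization error V_n(μ). -/
def quantErr (μ : Measure E2) (n : ℕ) : ℝ≥0∞ :=
  ⨅ (α : Set E2) (_ : α.Finite ∧ α.ncard ≤ n), err μ α

/-- α is an optimal set of n-means for μ. -/
def IsOptimal (μ : Measure E2) (n : ℕ) (α : Set E2) : Prop :=
  α.Finite ∧ α.ncard ≤ n ∧ err μ α = quantErr μ n

/-!
Put `ρ = 3⁻¹ ^ ℓ`. For a finite set `α` the function `x ↦ min_{a ∈ α} ‖x - a‖² - ‖x‖²` is a minimum
of affine functions, hence concave, so on a triangle it lies above the interpolation of its values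
at the vertices. Applied to the `3 · 3 ^ ℓ` triangles of level `ℓ + 1`, and combined with the mean
and the second moment of `P`, this bounds the quantization error of `α` from below by a finite sum
over the `9 · 3 ^ ℓ` vertices of these triangles.

The finite problem is bounded by weak duality. Every vertex gets a price, `7 / 18 · ρ²` for a corner
of a cell of level `ℓ` and `7 / 36 · ρ²` otherwise. No point of the plane collects a surplus
`∑ max 0 (price - dist²)` above `2 / 3 · ρ²`: either it only serves corners, which are at distance
at least `ρ` from one another, or all vertices it serves lie in a single cell. So `n` centers cost
at least the sum of all prices minus `n · 2 / 3 · ρ²`. For `n = 3 ^ ℓ + 1` the resulting bound is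
`ρ³ ((3 ^ ℓ - 1) / 6 + 5 / 54)`. The given set attains it, because a cell served by its centroid
contributes `ρ³ / 6` and `V_2(P) ≤ 5 / 54`.
-/

open scoped InnerProductSpace

section InnerProductSpace

variable {E ι : Type*} [NormedAddCommGroup E] [InnerProductSpace ℝ E] (s : Finset ι)

theorem sum_sum_norm_sub_sq_le (p : ι → E) (a : E) :
    ∑ i ∈ s, ∑ j ∈ s, ‖p i - p j‖ ^ 2 ≤ 2 * s.card * ∑ i ∈ s, ‖p i - a‖ ^ 2 := by
  have expand (i j : ι) : ‖p i - p j‖ ^ 2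
      = ‖p i - a‖ ^ 2 + ‖p j - a‖ ^ 2 - 2 * ⟪p i - a, p j - a⟫_ℝ := by
    rw [← sub_sub_sub_cancel_right _ _ a, norm_sub_sq_real, add_sub_right_comm]
  have cross : ∑ i ∈ s, ∑ j ∈ s, ⟪p i - a, p j - a⟫_ℝ = ‖∑ i ∈ s, (p i - a)‖ ^ 2 := by
    rw [← real_inner_self_eq_norm_sq, sum_inner]
    exact Finset.sum_congr rfl fun i _ => (inner_sum _ _ _).symm
  calc ∑ i ∈ s, ∑ j ∈ s, ‖p i - p j‖ ^ 2
      = 2 * s.card * ∑ i ∈ s, ‖p i - a‖ ^ 2 - 2 * ‖∑ i ∈ s, (p i - a)‖ ^ 2 := by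
        simp_rw [expand, ← cross, Finset.sum_sub_distrib, Finset.sum_add_distrib, Finset.mul_sum,
          Finset.sum_const, nsmul_eq_mul, ← Finset.mul_sum]
        ring
    _ ≤ _ := sub_le_self _ (by positivity)

theorem sub_one_mul_sq_div_two_le_sum_norm_sub_sq {p : ι → E} {δ : ℝ} (hδ : 0 ≤ δ)
    (hp : (s : Set ι).Pairwise fun i j => δ ≤ ‖p i - p j‖) (a : E) :
    (s.card - 1) * δ ^ 2 / 2 ≤ ∑ i ∈ s, ‖p i - a‖ ^ 2 := by
  classical
  rcases s.eq_empty_or_nonempty with rfl | hs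
  · simp only [Finset.card_empty, Nat.cast_zero, Finset.sum_empty]
    linarith [sq_nonneg δ]
  have hm : (0 : ℝ) < s.card := by exact_mod_cast hs.card_pos
  have row (i : ι) (hi : i ∈ s) : (s.card - 1) * δ ^ 2 ≤ ∑ j ∈ s, ‖p i - p j‖ ^ 2 := by
    rw [← Finset.add_sum_erase s _ hi, ← Nat.cast_pred hs.card_pos, ← Finset.card_erase_of_mem hi,
      ← nsmul_eq_mul]
    refine (Finset.card_nsmul_le_sum _ _ _ fun j hj => ?_).trans
      (le_add_of_nonneg_left (sq_nonneg _))
    exact pow_le_pow_left₀ hδ (hp hi (Finset.mem_of_mem_erase hj) (Finset.ne_of_mem_erase hj).symm)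
      2
  have total := (Finset.card_nsmul_le_sum s _ _ row).trans (sum_sum_norm_sub_sq_le s p a)
  rw [nsmul_eq_mul] at total
  nlinarith

variable {s} {w : ι → ℝ} {v : ι → E} {x : E}

theorem sum_mul_norm_sub_sq (hw : ∑ i ∈ s, w i = 1) (hx : ∑ i ∈ s, w i • (v i - x) = 0) (a : E) :
    ∑ i ∈ s, w i * ‖v i - a‖ ^ 2 = ‖x - a‖ ^ 2 + ∑ i ∈ s, w i * ‖v i - x‖ ^ 2 := by
  have expand (i : ι) : w i * ‖v i - a‖ ^ 2
      = w i * ‖v i - x‖ ^ 2 + 2 * ⟪w i • (v i - x), x - a⟫_ℝ + w i * ‖x - a‖ ^ 2 := by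
    rw [← sub_add_sub_cancel (v i) x a, norm_add_sq_real, real_inner_smul_left]
    ring
  simp only [expand, Finset.sum_add_distrib, ← Finset.mul_sum, ← Finset.sum_mul, ← sum_inner, hw,
    hx, inner_zero_left]
  ring

-- For fixed `a`, `x ↦ ‖x - a‖ ^ 2 - ‖x‖ ^ 2` is affine, so the minimum over `a ∈ α` is concave.
theorem sum_mul_infDist_sq_le (hw₀ : ∀ i ∈ s, 0 ≤ w i) (hw : ∑ i ∈ s, w i = 1)
    (hx : ∑ i ∈ s, w i • (v i - x) = 0) {α : Set E} (hα : IsCompact α) (hne : α.Nonempty) :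
    ∑ i ∈ s, w i * Metric.infDist (v i) α ^ 2
      ≤ Metric.infDist x α ^ 2 + ∑ i ∈ s, w i * ‖v i - x‖ ^ 2 := by
  obtain ⟨a, ha, hxa⟩ := hα.exists_infDist_eq_dist hne x
  rw [hxa, dist_eq_norm, ← sum_mul_norm_sub_sq hw hx]
  refine Finset.sum_le_sum fun i hi => mul_le_mul_of_nonneg_left ?_ (hw₀ i hi)
  rw [← dist_eq_norm]
  exact pow_le_pow_left₀ Metric.infDist_nonneg (Metric.infDist_le_dist_of_mem ha) 2

end InnerProductSpace

-- Weak duality: `i` pays at most `w i` to be served, and a center `a` collects the surplus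
-- `max 0 (w i - dist (p i) a ^ 2)` from every `i`.
theorem sum_le_sum_infDist_sq_add_card_mul {X ι : Type*} [PseudoMetricSpace X] (s : Finset ι)
    (p : ι → X) (w : ι → ℝ) {α : Finset X} (hα : α.Nonempty) {b : ℝ}
    (hb : ∀ a ∈ α, ∑ i ∈ s, max 0 (w i - dist (p i) a ^ 2) ≤ b) :
    ∑ i ∈ s, w i ≤ ∑ i ∈ s, Metric.infDist (p i) α ^ 2 + α.card * b := by
  have served (i : ι) :
      w i ≤ Metric.infDist (p i) α ^ 2 + ∑ a ∈ α, max 0 (w i - dist (p i) a ^ 2) := by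
    obtain ⟨a, ha, hia⟩ := α.finite_toSet.isCompact.exists_infDist_eq_dist hα (p i)
    have surplus := Finset.single_le_sum (f := fun a => max 0 (w i - dist (p i) a ^ 2))
      (fun _ _ => le_max_left _ _) ha
    rw [hia]
    linarith [le_max_right 0 (w i - dist (p i) a ^ 2)]
  calc ∑ i ∈ s, w i
      ≤ ∑ i ∈ s, Metric.infDist (p i) α ^ 2
          + ∑ a ∈ α, ∑ i ∈ s, max 0 (w i - dist (p i) a ^ 2) := by
        rw [Finset.sum_comm, ← Finset.sum_add_distrib]
        exact Finset.sum_le_sum fun i _ => served i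
    _ ≤ _ := by
        gcongr
        rw [← nsmul_eq_mul]
        exact Finset.sum_le_card_nsmul _ _ _ hb

theorem sum_max_zero_le_of_forall_subset {ι : Type*} {s : Finset ι} {f : ι → ℝ} {b : ℝ}
    (h : ∀ t ⊆ s, (∀ i ∈ t, 0 < f i) → ∑ i ∈ t, f i ≤ b) : ∑ i ∈ s, max 0 (f i) ≤ b := by
  have positive_part : ∑ i ∈ s, max 0 (f i) = ∑ i ∈ s with 0 < f i, f i := by
    rw [Finset.sum_filter]
    exact Finset.sum_congr rfl fun i _ => max_def_lt 0 (f i)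
  rw [positive_part]
  exact h _ (Finset.filter_subset _ _) fun i hi => (Finset.mem_filter.mp hi).2

/-- `f` is a similarity without rotation part: a homothety of ratio `r`, or a translation when
`r = 1`. -/
def IsHomothety {E : Type*} [AddCommGroup E] [Module ℝ E] (r : ℝ) (f : E → E) : Prop :=
  ∀ x y, f x - f y = r • (x - y)

namespace IsHomothety

theorem comp {E : Type*} [AddCommGroup E] [Module ℝ E] {r t : ℝ} {f g : E → E}
    (hf : IsHomothety r f) (hg : IsHomothety t g) : IsHomothety (r * t) (f ∘ g) := fun x y => by
  rw [Function.comp_apply, Function.comp_apply, hf, hg, smul_smul]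

variable {E : Type*} [NormedAddCommGroup E] [NormedSpace ℝ E] {r : ℝ} {f : E → E}

theorem norm_sub (hf : IsHomothety r f) (x y : E) : ‖f x - f y‖ = |r| * ‖x - y‖ := by
  rw [hf, norm_smul, Real.norm_eq_abs]

theorem norm_sub_sq (hf : IsHomothety r f) (x y : E) :
    ‖f x - f y‖ ^ 2 = r ^ 2 * ‖x - y‖ ^ 2 := by
  rw [hf.norm_sub, mul_pow, sq_abs]

theorem continuous (hf : IsHomothety r f) : Continuous f := by
  have affine : f = fun x => r • x + f 0 := funext fun x => by
    rw [← sub_eq_iff_eq_add, hf, sub_zero]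
  rw [affine]
  fun_prop

theorem infDist_le (hf : IsHomothety r f) {α β : Set E} (hα : IsCompact α) (hne : α.Nonempty)
    (hβ : Set.MapsTo f α β) (x : E) : Metric.infDist (f x) β ≤ |r| * Metric.infDist x α := by
  obtain ⟨a, ha, hxa⟩ := hα.exists_infDist_eq_dist hne x
  rw [hxa, dist_eq_norm, ← hf.norm_sub, ← dist_eq_norm]
  exact Metric.infDist_le_dist_of_mem (hβ ha)

end IsHomothety

section Triangle

/-- The vertices of the triangle `Tri`, numbered so that `vertex j` is the fixed point of
`Smap j`. -/
def vertex : Fin 3 → E2 :=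
  ![pt 0 0, pt 1 0, pt (1/2) (Real.sqrt 3 / 2)]

/-- The centroid of the triangle `Tri`, which is also the mean of the R-measure. -/
def center : E2 :=
  pt (1/2) (Real.sqrt 3 / 6)

/-- The `l`-th barycentric coordinate with respect to the triangle `Tri`, defined on the whole
plane: the affine function that is `1` at `vertex l` and `0` at the other two vertices. -/
def bary (l : Fin 3) (x : E2) : ℝ :=
  1 / 3 + 2 * ⟪vertex l - center, x - center⟫_ℝ

theorem inner_vertex_sub_center (i j : Fin 3) :
    ⟪vertex i - center, vertex j - center⟫_ℝ = if i = j then 1 / 3 else -(1 / 6) := by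
  have h3 : Real.sqrt 3 ^ 2 = 3 := Real.sq_sqrt (by norm_num)
  rw [PiLp.inner_apply, Fin.sum_univ_two]
  fin_cases i <;> fin_cases j <;> simp [vertex, center, pt, div_pow] <;> nlinarith

theorem norm_vertex_sub_center_sq (j : Fin 3) : ‖vertex j - center‖ ^ 2 = 1 / 3 := by
  rw [← real_inner_self_eq_norm_sq, inner_vertex_sub_center, if_pos rfl]

theorem sum_vertex_sub_center : ∑ j, (vertex j - center) = 0 := by
  ext i
  fin_cases i <;> simp [vertex, center, pt, Fin.sum_univ_three] <;> ring

theorem sum_inner_smul_vertex_sub_center (u : E2) :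
    ∑ l, ⟪vertex l - center, u⟫_ℝ • (vertex l - center) = (1 / 2 : ℝ) • u := by
  simp only [PiLp.inner_apply, Fin.sum_univ_two]
  ext i
  fin_cases i <;> simp [vertex, center, pt, Fin.sum_univ_three] <;> grind

theorem bary_vertex (i j : Fin 3) : bary i (vertex j) = if i = j then 1 else 0 := by
  rw [bary, inner_vertex_sub_center]
  split_ifs <;> norm_num

theorem bary_sub_bary (l : Fin 3) (x y : E2) :
    bary l x - bary l y = 2 * ⟪vertex l - center, x - y⟫_ℝ := by
  rw [bary, bary, ← sub_sub_sub_cancel_right x y center, inner_sub_right _ (x - center)]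
  ring

theorem continuous_bary (l : Fin 3) : Continuous (bary l) := by
  unfold bary
  fun_prop

theorem sum_bary (x : E2) : ∑ l, bary l x = 1 := by
  simp only [bary, Finset.sum_add_distrib, ← Finset.mul_sum, ← sum_inner, sum_vertex_sub_center,
    inner_zero_left]
  norm_num

theorem sum_bary_smul_vertex_sub (x : E2) : ∑ l, bary l x • (vertex l - x) = 0 := by
  have split (l : Fin 3) : bary l x • (vertex l - x) = (1 / 3 : ℝ) • (vertex l - center)
      + (2 : ℝ) • ⟪vertex l - center, x - center⟫_ℝ • (vertex l - center)
      - bary l x • (x - center) := by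
    rw [smul_smul, ← add_smul, ← bary, ← smul_sub, sub_sub_sub_cancel_right]
  rw [Finset.sum_congr rfl fun l _ => split l, Finset.sum_sub_distrib, Finset.sum_add_distrib,
    ← Finset.smul_sum, ← Finset.smul_sum, ← Finset.sum_smul, sum_vertex_sub_center,
    sum_inner_smul_vertex_sub_center, sum_bary]
  module

theorem norm_sub_sq_eq_sum_bary (x y : E2) :
    ‖x - y‖ ^ 2 = 1 / 2 * ∑ l, (bary l x - bary l y) ^ 2 := by
  have frame := congrArg (fun u => ⟪u, x - y⟫_ℝ) (sum_inner_smul_vertex_sub_center (x - y))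
  simp only [sum_inner, real_inner_smul_left, real_inner_self_eq_norm_sq, ← sq] at frame
  simp only [bary_sub_bary, mul_pow, ← Finset.mul_sum, frame]
  ring

theorem bary_le_one {x : E2} (hx : ∀ l, 0 ≤ bary l x) (l : Fin 3) : bary l x ≤ 1 :=
  sum_bary x ▸ Finset.single_le_sum (fun i _ => hx i) (Finset.mem_univ l)

theorem sum_bary_mul_norm_vertex_sub_sq (x : E2) :
    ∑ l, bary l x * ‖vertex l - x‖ ^ 2 = 1 / 3 - ‖x - center‖ ^ 2 := by
  have h := sum_mul_norm_sub_sq (sum_bary x) (sum_bary_smul_vertex_sub x) center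
  simp only [norm_vertex_sub_center_sq, ← Finset.sum_mul, sum_bary] at h
  linarith

theorem norm_sub_center_le_one {x : E2} (hx : ∀ l, 0 ≤ bary l x) : ‖x - center‖ ≤ 1 := by
  have h := Finset.sum_nonneg fun l (_ : l ∈ Finset.univ) =>
    mul_nonneg (hx l) (sq_nonneg ‖vertex l - x‖)
  rw [sum_bary_mul_norm_vertex_sub_sq] at h
  exact (sq_le_one_iff₀ (norm_nonneg _)).mp (by linarith)

theorem norm_vertex_sub_vertex {i j : Fin 3} (hij : i ≠ j) : ‖vertex i - vertex j‖ = 1 := by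
  rw [← sq_eq_sq₀ (norm_nonneg _) zero_le_one, ← sub_sub_sub_cancel_right _ _ center,
    norm_sub_sq_real, norm_vertex_sub_center_sq, norm_vertex_sub_center_sq,
    inner_vertex_sub_center, if_neg hij]
  norm_num

theorem bary_sub_bary_sub_le_two_mul_dist (i j : Fin 3) (x y : E2) :
    (bary i x - bary i y) - (bary j x - bary j y) ≤ 2 * dist x y := by
  have side : ‖vertex i - vertex j‖ ≤ 1 := by
    rcases eq_or_ne i j with rfl | hij
    · rw [sub_self, norm_zero]
      exact zero_le_one
    · exact (norm_vertex_sub_vertex hij).le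
  rw [bary_sub_bary, bary_sub_bary, ← mul_sub, ← inner_sub_left, sub_sub_sub_cancel_right,
    dist_eq_norm]
  gcongr
  exact (real_inner_le_norm _ _).trans (mul_le_of_le_one_left (norm_nonneg _) side)

end Triangle

section SelfSimilarity

theorem Smap_eq (j : Fin 3) (x : E2) : Smap j x = (3 : ℝ)⁻¹ • x + (2 / 3 : ℝ) • vertex j := by
  ext i
  fin_cases j <;> fin_cases i <;> simp [Smap, S1, S2, S3, vertex, pt]
  ring

theorem isHomothety_Smap (j : Fin 3) : IsHomothety 3⁻¹ (Smap j) := fun x y => by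
  rw [Smap_eq, Smap_eq]
  module

theorem Smap_vertex_self (j : Fin 3) : Smap j (vertex j) = vertex j := by
  rw [Smap_eq]
  module

theorem Smap_sub_center (j : Fin 3) (x : E2) :
    Smap j x - center = (3 : ℝ)⁻¹ • (x - center) + (2 / 3 : ℝ) • (vertex j - center) := by
  rw [Smap_eq]
  module

theorem bary_Smap (l j : Fin 3) (x : E2) :
    bary l (Smap j x) = bary l x / 3 + 2 / 3 * if l = j then 1 else 0 := by
  rw [← bary_vertex, bary, bary, bary, Smap_sub_center, inner_add_right, real_inner_smul_right,
    real_inner_smul_right]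
  ring

theorem bary_div_three_le_bary_Smap (l j : Fin 3) (x : E2) : bary l x / 3 ≤ bary l (Smap j x) := by
  rw [bary_Smap]
  exact le_add_of_nonneg_right (by positivity)

theorem bary_Smap_nonneg {x : E2} (hx : ∀ l, 0 ≤ bary l x) (j l : Fin 3) :
    0 ≤ bary l (Smap j x) :=
  (div_nonneg (hx l) zero_le_three).trans (bary_div_three_le_bary_Smap l j x)

theorem bary_Smap_le {x : E2} {η : ℝ} (hx : ∀ l, bary l x ≤ 1 - η) (j l : Fin 3) :
    bary l (Smap j x) ≤ 1 - η / 3 := by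
  rw [bary_Smap]
  have := hx l
  split_ifs <;> linarith

theorem norm_Smap_center_sub_center_sq (j : Fin 3) : ‖Smap j center - center‖ ^ 2 = 4 / 27 := by
  rw [Smap_sub_center, sub_self, smul_zero, zero_add, norm_smul, mul_pow, norm_vertex_sub_center_sq]
  norm_num

theorem Sword_zero (ω : Fin 0 → Fin 3) : Sword ω = id := by
  funext x
  simp [Sword]

theorem Sword_cons {k : ℕ} (j : Fin 3) (ω : Fin k → Fin 3) :
    Sword (Fin.cons j ω : Fin (k + 1) → Fin 3) = Smap j ∘ Sword ω := by
  funext x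
  simp [Sword, List.ofFn_succ]

theorem isHomothety_Sword {k : ℕ} (ω : Fin k → Fin 3) : IsHomothety (3⁻¹ ^ k) (Sword ω) := by
  induction ω using Fin.consInduction with
  | elim0 => exact fun x y => by rw [Sword_zero, id, id, pow_zero, one_smul]
  | cons j ω ih =>
    rw [Sword_cons, pow_succ']
    exact (isHomothety_Smap j).comp ih

theorem bary_Sword_nonneg {x : E2} (hx : ∀ l, 0 ≤ bary l x) {k : ℕ} (ω : Fin k → Fin 3) :
    ∀ l, 0 ≤ bary l (Sword ω x) := by
  induction ω using Fin.consInduction with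
  | elim0 => rwa [Sword_zero]
  | cons j ω ih =>
    rw [Sword_cons]
    exact bary_Smap_nonneg ih j

theorem bary_Sword_le {x : E2} {η : ℝ} (hx : ∀ l, bary l x ≤ 1 - η) {k : ℕ} (ω : Fin k → Fin 3) :
    ∀ l, bary l (Sword ω x) ≤ 1 - η / 3 ^ k := by
  induction ω using Fin.consInduction with
  | elim0 => rwa [Sword_zero, pow_zero, div_one]
  | cons j ω ih =>
    rw [Sword_cons, pow_succ, ← div_div]
    exact bary_Smap_le ih j

theorem le_dist_Smap_Smap {i j : Fin 3} (hij : i ≠ j) {x y : E2} (hx : ∀ l, 0 ≤ bary l x)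
    (hy : ∀ l, 0 ≤ bary l y) {η : ℝ} (hη : ∀ l, bary l x ≤ 1 - η) :
    (1 + η / 2) / 3 ≤ dist (Smap i x) (Smap j y) := by
  have h := bary_sub_bary_sub_le_two_mul_dist i j (Smap i x) (Smap j y)
  simp only [bary_Smap, if_true, if_neg hij, if_neg hij.symm] at h
  linarith [hx i, hη j, hy j, bary_le_one hy i]

theorem le_dist_Sword_Sword {x y : E2} (hx : ∀ l, 0 ≤ bary l x) (hy : ∀ l, 0 ≤ bary l y) {η : ℝ}
    (hη : ∀ l, bary l x ≤ 1 - η) {k : ℕ} {ω ω' : Fin k → Fin 3} (h : ω ≠ ω') :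
    (1 + η / 2) * 3⁻¹ ^ k ≤ dist (Sword ω x) (Sword ω' y) := by
  induction k with
  | zero => exact absurd (Subsingleton.elim ω ω') h
  | succ k ih =>
    obtain ⟨i, ω, rfl⟩ : ∃ i ν, ω = Fin.cons i ν := ⟨_, _, (Fin.cons_self_tail ω).symm⟩
    obtain ⟨j, ω', rfl⟩ : ∃ j ν, ω' = Fin.cons j ν := ⟨_, _, (Fin.cons_self_tail ω').symm⟩
    simp only [Sword_cons, Function.comp_apply]
    rcases eq_or_ne i j with rfl | hij
    · have tails_ne : ω ≠ ω' := fun e => h (congrArg _ e)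
      rw [dist_eq_norm, (isHomothety_Smap i).norm_sub, ← dist_eq_norm, pow_succ',
        mul_left_comm, abs_of_nonneg (by norm_num)]
      gcongr
      exact ih tails_ne
    · have first := le_dist_Smap_Smap hij (bary_Sword_nonneg hx ω) (bary_Sword_nonneg hy ω')
        (bary_Sword_le hη ω)
      have shrink : (3 : ℝ)⁻¹ ^ k ≤ 1 := pow_le_one₀ (by norm_num) (by norm_num)
      refine le_trans ?_ first
      calc (1 + η / 2) * 3⁻¹ ^ (k + 1) = (3⁻¹ ^ k + η / 3 ^ k / 2) / 3 := by
            rw [pow_succ, inv_pow]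
            ring
        _ ≤ (1 + η / 3 ^ k / 2) / 3 := by gcongr

end SelfSimilarity

section Pricing

/-- The nine vertices of the three triangles `Smap j '' Tri`; the pair is (triangle, vertex). -/
def subvertex (v : Fin 3 × Fin 3) : E2 :=
  Smap v.1 (vertex v.2)

/-- Three times the `l`-th barycentric coordinate of `subvertex v`, an integer so that
inequalities between such coordinates are decidable. -/
def subvertexCoord (v : Fin 3 × Fin 3) (l : Fin 3) : ℤ :=
  2 * (if l = v.1 then 1 else 0) + if l = v.2 then 1 else 0

/-- The dual variable of `subvertex v`: the most it pays to be served, in units of the squared side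
of its cell. With these two values (for corners of the cell and for the other vertices) the bound
`2 / 3` on the surplus that one center collects is attained for the vertices of the whole cell, of
any of its thirds, and of any two thirds. -/
def price (v : Fin 3 × Fin 3) : ℝ :=
  if v.1 = v.2 then 7 / 18 else 7 / 36

theorem bary_subvertex (v : Fin 3 × Fin 3) (l : Fin 3) :
    bary l (subvertex v) = subvertexCoord v l / 3 := by
  rw [subvertex, bary_Smap, bary_vertex, subvertexCoord]
  push_cast
  ring

theorem bary_subvertex_nonneg (v : Fin 3 × Fin 3) (l : Fin 3) : 0 ≤ bary l (subvertex v) :=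
  bary_Smap_nonneg (fun i => by rw [bary_vertex]; positivity) v.1 l

theorem bary_subvertex_le {v : Fin 3 × Fin 3} (hv : v.1 ≠ v.2) (l : Fin 3) :
    bary l (subvertex v) ≤ 1 - 1 / 3 := by
  rw [subvertex, bary_Smap, bary_vertex]
  split_ifs with h₂ h₁
  · exact absurd (h₁.symm.trans h₂) hv
  all_goals norm_num

theorem sum_sum_norm_subvertex_sub_sq (K : Finset (Fin 3 × Fin 3)) :
    ∑ v ∈ K, ∑ u ∈ K, ‖subvertex v - subvertex u‖ ^ 2
      = (∑ v ∈ K, ∑ u ∈ K, ∑ l, (subvertexCoord v l - subvertexCoord u l) ^ 2 : ℤ) / 18 := by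
  push_cast
  simp only [Finset.sum_div]
  refine Finset.sum_congr rfl fun v _ => Finset.sum_congr rfl fun u _ => ?_
  rw [norm_sub_sq_eq_sum_bary, Finset.mul_sum]
  refine Finset.sum_congr rfl fun l _ => ?_
  rw [bary_subvertex, bary_subvertex]
  ring

-- This is `card_mul_sum_price_le` in integers, a finite check over the `512` sets `K`.
theorem card_mul_sum_le_sum_subvertexCoord_sub_sq (K : Finset (Fin 3 × Fin 3)) :
    7 * (K.card : ℤ) * ∑ v ∈ K, (if v.1 = v.2 then 2 else 1) ≤
      24 * K.card + ∑ v ∈ K, ∑ u ∈ K, ∑ l, (subvertexCoord v l - subvertexCoord u l) ^ 2 := by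
  decide +revert +kernel

theorem card_mul_sum_price_le (K : Finset (Fin 3 × Fin 3)) :
    2 * K.card * ∑ v ∈ K, price v
      ≤ 4 / 3 * K.card + ∑ v ∈ K, ∑ u ∈ K, ‖subvertex v - subvertex u‖ ^ 2 := by
  have price_eq : ∑ v ∈ K, price v
      = 7 / 36 * (∑ v ∈ K, if v.1 = v.2 then 2 else 1 : ℤ) := by
    push_cast
    rw [Finset.mul_sum]
    refine Finset.sum_congr rfl fun v _ => ?_
    rw [price]
    split_ifs <;> norm_num
  have h : (_ : ℝ) ≤ _ := Int.cast_le.mpr (card_mul_sum_le_sum_subvertexCoord_sub_sq K)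
  rw [sum_sum_norm_subvertex_sub_sq, price_eq]
  rw [Int.cast_mul, Int.cast_add] at h
  push_cast at h ⊢
  linarith

theorem sum_price_sub_norm_sq_le_of_isHomothety {r : ℝ} {f : E2 → E2} (hf : IsHomothety r f)
    (K : Finset (Fin 3 × Fin 3)) (a : E2) :
    ∑ v ∈ K, (price v * r ^ 2 - ‖f (subvertex v) - a‖ ^ 2) ≤ 2 / 3 * r ^ 2 := by
  rcases K.eq_empty_or_nonempty with rfl | hK
  · rw [Finset.sum_empty]
    positivity
  have hcard : (0 : ℝ) < K.card := by exact_mod_cast hK.card_pos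
  have spread := sum_sum_norm_sub_sq_le K (fun v => f (subvertex v)) a
  simp only [hf.norm_sub_sq, ← Finset.mul_sum] at spread
  have prices := mul_le_mul_of_nonneg_left (card_mul_sum_price_le K) (sq_nonneg r)
  rw [Finset.sum_sub_distrib, ← Finset.sum_mul]
  refine le_of_mul_le_mul_left ?_ (mul_pos two_pos hcard)
  linarith

variable {ℓ : ℕ}

theorem le_dist_corner_corner {p q : (Fin ℓ → Fin 3) × Fin 3 × Fin 3} (hp : p.2.1 = p.2.2)
    (hq : q.2.1 = q.2.2) (hpq : p ≠ q) :
    (3 : ℝ)⁻¹ ^ ℓ ≤ ‖Sword p.1 (subvertex p.2) - Sword q.1 (subvertex q.2)‖ := by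
  obtain ⟨ω, i, _⟩ := p
  obtain ⟨ν, j, _⟩ := q
  obtain rfl : i = _ := hp
  obtain rfl : j = _ := hq
  rcases eq_or_ne ω ν with rfl | hων
  · have hij : i ≠ j := by
      rintro rfl
      exact hpq rfl
    rw [(isHomothety_Sword ω).norm_sub, subvertex, subvertex, Smap_vertex_self, Smap_vertex_self,
      norm_vertex_sub_vertex hij, mul_one]
    exact le_abs_self _
  · have h := le_dist_Sword_Sword (bary_subvertex_nonneg (i, i)) (bary_subvertex_nonneg (j, j))
      (η := 0) (fun l => by simpa using bary_le_one (bary_subvertex_nonneg (i, i)) l) hων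
    rwa [zero_div, add_zero, one_mul, dist_eq_norm] at h

theorem fst_eq_of_price_sub_dist_sq_pos {p q : (Fin ℓ → Fin 3) × Fin 3 × Fin 3}
    (hp : p.2.1 ≠ p.2.2) {a : E2}
    (hpa : 0 < price p.2 * (3⁻¹ ^ ℓ) ^ 2 - dist (Sword p.1 (subvertex p.2)) a ^ 2)
    (hqa : 0 < price q.2 * (3⁻¹ ^ ℓ) ^ 2 - dist (Sword q.1 (subvertex q.2)) a ^ 2) :
    q.1 = p.1 := by
  by_contra hne
  set ρ : ℝ := 3⁻¹ ^ ℓ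
  have hρ : 0 < ρ := by positivity
  have far : (1 + 1 / 3 / 2) * ρ ≤ dist (Sword p.1 (subvertex p.2)) (Sword q.1 (subvertex q.2)) :=
    le_dist_Sword_Sword (bary_subvertex_nonneg p.2) (bary_subvertex_nonneg q.2)
      (bary_subvertex_le hp) (Ne.symm hne)
  have near_p : dist (Sword p.1 (subvertex p.2)) a < 4 / 9 * ρ := by
    refine lt_of_pow_lt_pow_left₀ 2 (by positivity) ?_
    rw [price, if_neg hp] at hpa
    nlinarith
  have near_q : dist (Sword q.1 (subvertex q.2)) a < 5 / 8 * ρ := by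
    have price_le : price q.2 ≤ 7 / 18 := by
      rw [price]
      split_ifs <;> norm_num
    refine lt_of_pow_lt_pow_left₀ 2 (by positivity) ?_
    nlinarith
  linarith [dist_triangle_right (Sword p.1 (subvertex p.2)) (Sword q.1 (subvertex q.2)) a]

theorem sum_price_sub_dist_sq_le_of_corners {K : Finset ((Fin ℓ → Fin 3) × Fin 3 × Fin 3)}
    (hK : ∀ p ∈ K, p.2.1 = p.2.2) (a : E2) :
    ∑ p ∈ K, (price p.2 * (3⁻¹ ^ ℓ) ^ 2 - dist (Sword p.1 (subvertex p.2)) a ^ 2)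
      ≤ 2 / 3 * (3⁻¹ ^ ℓ) ^ 2 := by
  have apart := sub_one_mul_sq_div_two_le_sum_norm_sub_sq K
    (p := fun p => Sword p.1 (subvertex p.2)) (δ := 3⁻¹ ^ ℓ) (by positivity)
    (fun p hp q hq => le_dist_corner_corner (hK p hp) (hK q hq)) a
  have prices : ∑ p ∈ K, price p.2 * ((3 : ℝ)⁻¹ ^ ℓ) ^ 2
      = K.card * (7 / 18 * (3⁻¹ ^ ℓ) ^ 2) := by
    rw [← nsmul_eq_mul]
    exact Finset.sum_eq_card_nsmul fun p hp => by rw [price, if_pos (hK p hp)]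
  simp only [dist_eq_norm]
  rw [Finset.sum_sub_distrib, prices]
  linarith [sq_nonneg ((3 : ℝ)⁻¹ ^ ℓ),
    mul_nonneg (Nat.cast_nonneg (α := ℝ) K.card) (sq_nonneg ((3 : ℝ)⁻¹ ^ ℓ))]

theorem sum_max_price_sub_dist_sq_le (a : E2) :
    ∑ p : (Fin ℓ → Fin 3) × Fin 3 × Fin 3,
        max 0 (price p.2 * (3⁻¹ ^ ℓ) ^ 2 - dist (Sword p.1 (subvertex p.2)) a ^ 2)
      ≤ 2 / 3 * (3⁻¹ ^ ℓ) ^ 2 := by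
  refine sum_max_zero_le_of_forall_subset fun K _ hpos => ?_
  by_cases hK : ∀ p ∈ K, p.2.1 = p.2.2
  · exact sum_price_sub_dist_sq_le_of_corners hK a
  obtain ⟨p, hp, hinner⟩ : ∃ p ∈ K, p.2.1 ≠ p.2.2 := by
    simpa only [not_forall, exists_prop] using hK
  have same_cell (q) (hq : q ∈ K) : q.1 = p.1 :=
    fst_eq_of_price_sub_dist_sq_pos hinner (hpos p hp) (hpos q hq)
  have inj : Set.InjOn Prod.snd (K : Set ((Fin ℓ → Fin 3) × Fin 3 × Fin 3)) := fun q hq q' hq' h =>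
    Prod.ext ((same_cell q hq).trans (same_cell q' hq').symm) h
  calc ∑ q ∈ K, (price q.2 * (3⁻¹ ^ ℓ) ^ 2 - dist (Sword q.1 (subvertex q.2)) a ^ 2)
      = ∑ v ∈ K.image Prod.snd, (price v * (3⁻¹ ^ ℓ) ^ 2 - ‖Sword p.1 (subvertex v) - a‖ ^ 2) := by
        rw [Finset.sum_image inj]
        exact Finset.sum_congr rfl fun q hq => by rw [same_cell q hq, dist_eq_norm]
    _ ≤ _ := sum_price_sub_norm_sq_le_of_isHomothety (isHomothety_Sword p.1) _ a

theorem le_sum_infDist_Sword_subvertex_sq {α : Set E2} (hα : α.Finite) (hne : α.Nonempty) :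
    (7 / 3 * 3 ^ ℓ - 2 / 3 * α.ncard) * (3⁻¹ ^ ℓ) ^ 2
      ≤ ∑ ω : Fin ℓ → Fin 3, ∑ v, Metric.infDist (Sword ω (subvertex v)) α ^ 2 := by
  lift α to Finset E2 using hα
  have duality := sum_le_sum_infDist_sq_add_card_mul Finset.univ
    (fun p : (Fin ℓ → Fin 3) × Fin 3 × Fin 3 => Sword p.1 (subvertex p.2))
    (fun p => price p.2 * (3⁻¹ ^ ℓ) ^ 2) hne fun a _ => sum_max_price_sub_dist_sq_le a
  have sum_price : ∑ v, price v = 7 / 3 := by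
    simp only [price, Fintype.sum_prod_type, Fin.sum_univ_three, Fin.isValue, Fin.reduceEq, if_true,
      if_false]
    norm_num
  have words : ∑ p : (Fin ℓ → Fin 3) × Fin 3 × Fin 3, price p.2 * ((3 : ℝ)⁻¹ ^ ℓ) ^ 2
      = 7 / 3 * 3 ^ ℓ * (3⁻¹ ^ ℓ) ^ 2 := by
    rw [Fintype.sum_prod_type]
    simp only [← Finset.sum_mul, sum_price, Finset.sum_const, Finset.card_univ, Fintype.card_pi,
      Fintype.card_fin, Finset.prod_const, nsmul_eq_mul, Nat.cast_pow, Nat.cast_ofNat]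
    ring
  rw [words, Fintype.sum_prod_type] at duality
  rw [Set.ncard_coe_finset]
  linarith

end Pricing

/-- `P` is invariant under the three maps `Smap j`, taken with probability `1 / 3` each; the
R-measure is the only probability measure with this property. -/
def IsRMeasure (P : Measure E2) : Prop :=
  P = (3 : ℝ≥0∞)⁻¹ • ∑ j, P.map (Smap j)

namespace IsRMeasure

variable {P : Measure E2}

section SelfSimilarity

variable {F : Type*} [NormedAddCommGroup F] {f : E2 → F}

theorem integrable_map (hP : IsRMeasure P) (hf : Integrable f P) (j : Fin 3) :
    Integrable f (P.map (Smap j)) := by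
  rw [hP, integrable_smul_measure (by simp) (by simp), integrable_finsetSum_measure] at hf
  exact hf j (Finset.mem_univ j)

theorem integrable_comp_Smap (hP : IsRMeasure P) (hf : Integrable f P) (j : Fin 3) :
    Integrable (fun x => f (Smap j x)) P :=
  (hP.integrable_map hf j).comp_measurable (isHomothety_Smap j).continuous.measurable

theorem integral_eq_sum_integral_comp_Smap [NormedSpace ℝ F] (hP : IsRMeasure P)
    (hf : Integrable f P) : ∫ x, f x ∂P = (3 : ℝ)⁻¹ • ∑ j, ∫ x, f (Smap j x) ∂P := by
  have pull (j : Fin 3) : ∫ x, f x ∂P.map (Smap j) = ∫ x, f (Smap j x) ∂P :=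
    integral_map (isHomothety_Smap j).continuous.aemeasurable
      (hP.integrable_map hf j).aestronglyMeasurable
  conv_lhs => rw [hP]
  rw [integral_smul_measure, integral_finsetSum_measure fun j _ => hP.integrable_map hf j]
  simp only [pull, ENNReal.toReal_inv, ENNReal.toReal_ofNat]

end SelfSimilarity

variable [IsProbabilityMeasure P]

-- `g` measures how far `x` lies beyond a side of the triangle; the maps contract it to at most
-- `g x / 3`, so invariance of `∫ arctan ∘ g` forces `g = g / 3` almost everywhere.
theorem ae_bary_nonneg (hP : IsRMeasure P) : ∀ᵐ x ∂P, ∀ l, 0 ≤ bary l x := by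
  refine ae_all_iff.mpr fun l => ?_
  set g : E2 → ℝ := fun x => max 0 (-bary l x)
  have hg : Continuous g := continuous_const.max (continuous_bary l).neg
  have contract (j : Fin 3) (x : E2) : g (Smap j x) ≤ g x / 3 :=
    max_le (div_nonneg (le_max_left _ _) zero_le_three) <| by
      linarith [bary_div_three_le_bary_Smap l j x, le_max_right 0 (-bary l x)]
  have integrable_arctan {h : E2 → ℝ} (hh : Continuous h) :
      Integrable (fun x => Real.arctan (h x)) P :=
    .of_bound (by fun_prop) (Real.pi / 2) <| .of_forall fun x =>
      (abs_lt.mpr ⟨Real.neg_pi_div_two_lt_arctan _, Real.arctan_lt_pi_div_two _⟩).le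
  have hint := integrable_arctan hg
  have hint' := integrable_arctan (hg.div_const 3)
  have mono : (fun x => Real.arctan (g x / 3)) ≤ fun x => Real.arctan (g x) := fun x =>
    Real.arctan_mono (div_le_self (le_max_left _ _) (by norm_num))
  have shrink : ∫ x, Real.arctan (g x) ∂P ≤ ∫ x, Real.arctan (g x / 3) ∂P := by
    rw [hP.integral_eq_sum_integral_comp_Smap hint, smul_eq_mul, inv_mul_le_iff₀ three_pos]
    refine (Finset.sum_le_card_nsmul _ _ _ fun j _ => integral_mono
      (hP.integrable_comp_Smap hint j) hint' fun x => Real.arctan_mono (contract j x)).trans_eq ?_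
    simp
  have equal := (integral_eq_iff_of_ae_le hint' hint (.of_forall mono)).mp
    (le_antisymm (integral_mono hint' hint mono) shrink)
  filter_upwards [equal] with x hx
  linarith [Real.arctan_injective hx, le_max_right 0 (-bary l x)]

theorem integrable {F : Type*} [NormedAddCommGroup F] (hP : IsRMeasure P) {f : E2 → F}
    (hf : Continuous f) : Integrable f P := by
  obtain ⟨C, hC⟩ :=
    (isCompact_closedBall center 1).exists_bound_of_continuousOn hf.continuousOn
  refine .of_bound hf.aestronglyMeasurable C ?_
  filter_upwards [hP.ae_bary_nonneg] with x hx
  exact hC x (mem_closedBall_iff_norm.mpr (norm_sub_center_le_one hx))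

theorem integral_eq_sum_integral_comp_Sword (hP : IsRMeasure P) {f : E2 → ℝ} (hf : Continuous f)
    (k : ℕ) : ∫ x, f x ∂P = 3⁻¹ ^ k * ∑ ω : Fin k → Fin 3, ∫ x, f (Sword ω x) ∂P := by
  induction k generalizing f with
  | zero => simp [Sword_zero]
  | succ k ih =>
    have piece (j : Fin 3) : ∫ x, f (Smap j x) ∂P
        = 3⁻¹ ^ k * ∑ ω : Fin k → Fin 3,
            ∫ x, f (Sword (Fin.cons j ω : Fin (k + 1) → Fin 3) x) ∂P := by
      simp only [Sword_cons]
      exact ih (hf.comp (isHomothety_Smap j).continuous)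
    rw [hP.integral_eq_sum_integral_comp_Smap (hP.integrable hf),
      ← (Fin.consEquiv fun _ => Fin 3).sum_comp, Fintype.sum_prod_type, pow_succ', mul_assoc,
      Finset.mul_sum, smul_eq_mul, Finset.sum_congr rfl fun j _ => piece j]
    rfl

theorem integral_sub_center (hP : IsRMeasure P) : ∫ x, (x - center) ∂P = 0 := by
  have hint : Integrable (fun x : E2 => x - center) P := hP.integrable (by fun_prop)
  have piece (j : Fin 3) : ∫ x, (Smap j x - center) ∂P
      = (3 : ℝ)⁻¹ • ∫ x, (x - center) ∂P + (2 / 3 : ℝ) • (vertex j - center) := by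
    simp only [Smap_sub_center]
    rw [integral_add (hP.integrable (by fun_prop)) (integrable_const _), integral_smul,
      integral_const, probReal_univ, one_smul]
  have selfSimilar : ∫ x, (x - center) ∂P = (3 : ℝ)⁻¹ • ∫ x, (x - center) ∂P := by
    conv_lhs => rw [hP.integral_eq_sum_integral_comp_Smap hint]
    rw [Finset.sum_congr rfl fun j _ => piece j, Finset.sum_add_distrib, Finset.sum_const,
      ← Finset.smul_sum, sum_vertex_sub_center, Finset.card_univ, Fintype.card_fin]
    module
  linear_combination (norm := module) (3 / 2 : ℝ) • selfSimilar

theorem integral_inner_sub_center (hP : IsRMeasure P) (u : E2) :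
    ∫ x, ⟪u, x - center⟫_ℝ ∂P = 0 := by
  rw [integral_inner (hP.integrable (by fun_prop)), hP.integral_sub_center, inner_zero_right]

theorem integral_bary (hP : IsRMeasure P) (l : Fin 3) : ∫ x, bary l x ∂P = 1 / 3 := by
  unfold bary
  rw [integral_add (integrable_const _) (hP.integrable (by fun_prop)), integral_const_mul,
    hP.integral_inner_sub_center, mul_zero, add_zero, integral_const, probReal_univ, one_smul]

theorem integral_norm_sub_sq_of_isHomothety (hP : IsRMeasure P) {r : ℝ} {f : E2 → E2}
    (hf : IsHomothety r f) (a : E2) : ∫ x, ‖f x - a‖ ^ 2 ∂P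
      = r ^ 2 * ∫ x, ‖x - center‖ ^ 2 ∂P + ‖f center - a‖ ^ 2 := by
  have expand (x : E2) : ‖f x - a‖ ^ 2 = r ^ 2 * ‖x - center‖ ^ 2
      + 2 * r * ⟪f center - a, x - center⟫_ℝ + ‖f center - a‖ ^ 2 := by
    rw [← sub_add_sub_cancel (f x) (f center) a, norm_add_sq_real, hf.norm_sub_sq, hf,
      real_inner_smul_left, real_inner_comm]
    ring
  rw [integral_congr_ae (.of_forall expand),
    integral_add (hP.integrable (by fun_prop)) (integrable_const _),
    integral_add (hP.integrable (by fun_prop)) (hP.integrable (by fun_prop)), integral_const_mul,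
    integral_const_mul, hP.integral_inner_sub_center, integral_const, probReal_univ, one_smul]
  ring

theorem integral_norm_sub_center_sq (hP : IsRMeasure P) : ∫ x, ‖x - center‖ ^ 2 ∂P = 1 / 6 := by
  have selfSimilar := hP.integral_eq_sum_integral_comp_Smap
    (f := fun x => ‖x - center‖ ^ 2) (hP.integrable (by fun_prop))
  have piece (j : Fin 3) : ∫ x, ‖Smap j x - center‖ ^ 2 ∂P
      = 3⁻¹ ^ 2 * ∫ x, ‖x - center‖ ^ 2 ∂P + 4 / 27 := by
    rw [hP.integral_norm_sub_sq_of_isHomothety (isHomothety_Smap j),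
      norm_Smap_center_sub_center_sq]
  rw [Fin.sum_univ_three, piece, piece, piece, smul_eq_mul] at selfSimilar
  linarith

end IsRMeasure

/-- Real-valued version of `err`; the two agree up to `ENNReal.ofReal` for finite nonempty `α`,
whereas `distortion P ∅ = 0` and `err P ∅ = ⊤`. -/
def distortion (P : Measure E2) (α : Set E2) : ℝ :=
  ∫ x, Metric.infDist x α ^ 2 ∂P

/-- The set obtained from the centroids of the `3 ^ ℓ` cells of level `ℓ` when the centroid of the
cell `τ` is replaced by a copy of `α` scaled into that cell. -/
def refinedCenters {ℓ : ℕ} (τ : Fin ℓ → Fin 3) (α : Set E2) : Set E2 :=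
  (fun ω => Sword ω center) '' {ω | ω ≠ τ} ∪ Sword τ '' α

theorem finite_refinedCenters {ℓ : ℕ} (τ : Fin ℓ → Fin 3) {α : Set E2} (hα : α.Finite) :
    (refinedCenters τ α).Finite :=
  (Set.toFinite _).union (hα.image _)

theorem nonempty_refinedCenters {ℓ : ℕ} (τ : Fin ℓ → Fin 3) {α : Set E2} (hne : α.Nonempty) :
    (refinedCenters τ α).Nonempty :=
  (hne.image _).inr

theorem ncard_refinedCenters_add_one_le {ℓ : ℕ} (τ : Fin ℓ → Fin 3) {α : Set E2} (hα : α.Finite) :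
    (refinedCenters τ α).ncard + 1 ≤ 3 ^ ℓ + α.ncard := by
  have others : {ω | ω ≠ τ}.ncard + 1 = 3 ^ ℓ := by
    have h := Set.ncard_compl_add_ncard {τ}
    rwa [Set.ncard_singleton, Nat.card_eq_fintype_card, Fintype.card_pi_const,
      Fintype.card_fin] at h
  calc (refinedCenters τ α).ncard + 1
      ≤ {ω | ω ≠ τ}.ncard + α.ncard + 1 := Nat.add_le_add_right ((Set.ncard_union_le _ _).trans
        (Nat.add_le_add (Set.ncard_image_le (Set.toFinite _)) (Set.ncard_image_le hα))) 1
    _ = 3 ^ ℓ + α.ncard := by rw [add_right_comm, others]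

theorem continuous_infDist_sq (α : Set E2) : Continuous fun x => Metric.infDist x α ^ 2 :=
  (Metric.continuous_infDist_pt α).pow 2

theorem iInf_ofReal_norm_sub_sq {α : Set E2} (hα : α.Finite) (hne : α.Nonempty) (x : E2) :
    ⨅ a ∈ α, ENNReal.ofReal (‖x - a‖ ^ 2) = ENNReal.ofReal (Metric.infDist x α ^ 2) := by
  obtain ⟨a, ha, hxa⟩ := hα.isCompact.exists_infDist_eq_dist hne x
  refine le_antisymm ((iInf₂_le a ha).trans_eq (by rw [hxa, dist_eq_norm])) ?_
  refine le_iInf₂ fun b hb => ENNReal.ofReal_le_ofReal ?_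
  rw [← dist_eq_norm]
  exact pow_le_pow_left₀ Metric.infDist_nonneg (Metric.infDist_le_dist_of_mem hb) 2

theorem err_empty (P : Measure E2) [NeZero P] : err P ∅ = ⊤ := by
  simp [err, NeZero.ne P]

namespace IsRMeasure

variable {P : Measure E2} [IsProbabilityMeasure P] {r : ℝ} {f : E2 → E2}

theorem err_eq (hP : IsRMeasure P) {α : Set E2} (hα : α.Finite) (hne : α.Nonempty) :
    err P α = ENNReal.ofReal (distortion P α) := by
  rw [distortion, ofReal_integral_eq_lintegral_ofReal (hP.integrable (continuous_infDist_sq α))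
    (.of_forall fun x => sq_nonneg _)]
  exact lintegral_congr fun x => iInf_ofReal_norm_sub_sq hα hne x

theorem distortion_singleton_center (hP : IsRMeasure P) : distortion P {center} = 1 / 6 := by
  simp only [distortion, Metric.infDist_singleton, dist_eq_norm]
  exact hP.integral_norm_sub_center_sq

theorem integral_infDist_sq_le (hP : IsRMeasure P) (hf : IsHomothety r f) {α β : Set E2}
    (hα : α.Finite) (hne : α.Nonempty) (hβ : Set.MapsTo f α β) :
    ∫ x, Metric.infDist (f x) β ^ 2 ∂P ≤ r ^ 2 * distortion P α := by
  rw [distortion, ← integral_const_mul]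
  refine integral_mono (hP.integrable ((continuous_infDist_sq β).comp hf.continuous))
    ((hP.integrable (continuous_infDist_sq α)).const_mul _) fun x => ?_
  rw [← sq_abs r, ← mul_pow]
  exact pow_le_pow_left₀ Metric.infDist_nonneg (hf.infDist_le hα.isCompact hne hβ x) 2

theorem le_integral_infDist_sq_of_isHomothety (hP : IsRMeasure P) (hf : IsHomothety r f)
    {α : Set E2} (hα : α.Finite) (hne : α.Nonempty) :
    1 / 3 * ∑ l, Metric.infDist (f (vertex l)) α ^ 2 - r ^ 2 / 6
      ≤ ∫ x, Metric.infDist (f x) α ^ 2 ∂P := by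
  have pointwise (x : E2) (hx : ∀ l, 0 ≤ bary l x) :
      ∑ l, bary l x * Metric.infDist (f (vertex l)) α ^ 2
        ≤ Metric.infDist (f x) α ^ 2 + r ^ 2 * (1 / 3 - ‖x - center‖ ^ 2) := by
    have barycenter : ∑ l, bary l x • (f (vertex l) - f x) = 0 := by
      simp only [hf _ x, smul_comm _ r, ← Finset.smul_sum, sum_bary_smul_vertex_sub, smul_zero]
    have h := sum_mul_infDist_sq_le (fun l _ => hx l) (sum_bary x) barycenter hα.isCompact hne
    simpa only [hf.norm_sub_sq, mul_left_comm _ (r ^ 2), ← Finset.mul_sum,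
      sum_bary_mul_norm_vertex_sub_sq] using h
  have hcell : Integrable (fun x => Metric.infDist (f x) α ^ 2) P :=
    hP.integrable ((continuous_infDist_sq α).comp hf.continuous)
  have hbary (l : Fin 3) : Integrable (fun x => bary l x * Metric.infDist (f (vertex l)) α ^ 2) P :=
    (hP.integrable (continuous_bary l)).mul_const _
  have integrated := integral_mono_ae (integrable_finsetSum _ fun l _ => hbary l)
    (hcell.add (hP.integrable (by fun_prop))) (hP.ae_bary_nonneg.mono pointwise)
  rw [integral_finsetSum _ fun l _ => hbary l, integral_add' hcell (hP.integrable (by fun_prop)),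
    integral_const_mul, integral_sub (integrable_const _) (hP.integrable (by fun_prop)),
    hP.integral_norm_sub_center_sq, integral_const, probReal_univ, one_smul] at integrated
  simp only [integral_mul_const, hP.integral_bary, ← Finset.mul_sum] at integrated
  linarith

theorem le_integral_infDist_sq_subvertex (hP : IsRMeasure P) (hf : IsHomothety r f) {α : Set E2}
    (hα : α.Finite) (hne : α.Nonempty) :
    1 / 9 * ∑ v, Metric.infDist (f (subvertex v)) α ^ 2 - r ^ 2 / 54
      ≤ ∫ x, Metric.infDist (f x) α ^ 2 ∂P := by
  have hcell : Integrable (fun x => Metric.infDist (f x) α ^ 2) P :=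
    hP.integrable ((continuous_infDist_sq α).comp hf.continuous)
  rw [hP.integral_eq_sum_integral_comp_Smap hcell, Fintype.sum_prod_type]
  have thirds := Finset.sum_le_sum fun j (_ : j ∈ Finset.univ) =>
    hP.le_integral_infDist_sq_of_isHomothety (hf.comp (isHomothety_Smap j)) hα hne
  simp only [Function.comp_apply, Finset.sum_sub_distrib, ← Finset.mul_sum, Finset.sum_const,
    Finset.card_univ, Fintype.card_fin, nsmul_eq_mul, smul_eq_mul, subvertex] at thirds ⊢
  push_cast at thirds
  linarith

theorem inv_three_pow_mul_three_pow (ℓ : ℕ) : (3 : ℝ)⁻¹ ^ ℓ * 3 ^ ℓ = 1 := by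
  rw [← mul_pow, inv_mul_cancel₀ three_ne_zero, one_pow]

theorem le_distortion (hP : IsRMeasure P) (ℓ : ℕ) {α : Set E2} (hα : α.Finite)
    (hne : α.Nonempty) :
    13 / 54 * (3⁻¹ ^ ℓ) ^ 2 - 2 / 27 * α.ncard * (3⁻¹ ^ ℓ) ^ 3 ≤ distortion P α := by
  have cells := Finset.sum_le_sum fun ω (_ : ω ∈ Finset.univ) =>
    hP.le_integral_infDist_sq_subvertex (isHomothety_Sword (k := ℓ) ω) hα hne
  rw [Finset.sum_sub_distrib, ← Finset.mul_sum, Finset.sum_const, Finset.card_univ,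
    Fintype.card_pi_const, Fintype.card_fin, nsmul_eq_mul, Nat.cast_pow, Nat.cast_ofNat] at cells
  have vertices := le_sum_infDist_Sword_subvertex_sq (ℓ := ℓ) hα hne
  rw [distortion, hP.integral_eq_sum_integral_comp_Sword (continuous_infDist_sq α) ℓ]
  refine le_trans ?_ (mul_le_mul_of_nonneg_left cells (by positivity))
  set ρ : ℝ := 3⁻¹ ^ ℓ
  calc _ = ρ * (1 / 9 * ((7 / 3 * 3 ^ ℓ - 2 / 3 * α.ncard) * ρ ^ 2) - 3 ^ ℓ * (ρ ^ 2 / 54)) := by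
        linear_combination (-(13 / 54) * ρ ^ 2) * inv_three_pow_mul_three_pow ℓ
    _ ≤ _ := by gcongr

theorem distortion_refinedCenters_le (hP : IsRMeasure P) {ℓ : ℕ} (τ : Fin ℓ → Fin 3)
    {α : Set E2} (hα : α.Finite) (hne : α.Nonempty) :
    distortion P (refinedCenters τ α)
      ≤ 3⁻¹ ^ ℓ * ((3 ^ ℓ - 1) * ((3⁻¹ ^ ℓ) ^ 2 / 6) + (3⁻¹ ^ ℓ) ^ 2 * distortion P α) := by
  set β := refinedCenters τ α
  have other_cell (ω : Fin ℓ → Fin 3) (hω : ω ∈ Finset.univ.erase τ) :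
      ∫ x, Metric.infDist (Sword ω x) β ^ 2 ∂P ≤ (3⁻¹ ^ ℓ) ^ 2 / 6 := by
    have h := hP.integral_infDist_sq_le (isHomothety_Sword ω) (β := β)
      (Set.finite_singleton center) (Set.singleton_nonempty center) <|
      Set.mapsTo_singleton.mpr <| .inl <| Set.mem_image_of_mem _ (Finset.ne_of_mem_erase hω)
    rw [hP.distortion_singleton_center] at h
    linarith
  have cell : ∫ x, Metric.infDist (Sword τ x) β ^ 2 ∂P ≤ (3⁻¹ ^ ℓ) ^ 2 * distortion P α :=
    hP.integral_infDist_sq_le (isHomothety_Sword τ) hα hne fun a ha =>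
      .inr (Set.mem_image_of_mem _ ha)
  have others := Finset.sum_le_card_nsmul _ _ _ other_cell
  rw [Finset.card_erase_of_mem (Finset.mem_univ τ), Finset.card_univ, Fintype.card_pi_const,
    Fintype.card_fin, nsmul_eq_mul, Nat.cast_pred (by positivity), Nat.cast_pow,
    Nat.cast_ofNat] at others
  rw [distortion, hP.integral_eq_sum_integral_comp_Sword (continuous_infDist_sq β) ℓ,
    ← Finset.sum_erase_add _ _ (Finset.mem_univ τ)]
  gcongr

theorem distortion_refinedCenters_le_distortion (hP : IsRMeasure P) {ℓ : ℕ}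
    (τ : Fin ℓ → Fin 3) {α β : Set E2} (hα : α.Finite) (hne : α.Nonempty)
    (two_means : distortion P α ≤ 5 / 54) (hβ : β.Finite) (hβne : β.Nonempty)
    (hcard : β.ncard ≤ 3 ^ ℓ + 1) :
    distortion P (refinedCenters τ α) ≤ distortion P β := by
  have hcard' : (β.ncard : ℝ) ≤ 3 ^ ℓ + 1 := by exact_mod_cast hcard
  refine (hP.distortion_refinedCenters_le τ hα hne).trans <|
    le_trans ?_ (hP.le_distortion ℓ hβ hβne)
  set ρ : ℝ := 3⁻¹ ^ ℓ
  have count : ρ * 3 ^ ℓ = 1 := inv_three_pow_mul_three_pow ℓ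
  calc ρ * ((3 ^ ℓ - 1) * (ρ ^ 2 / 6) + ρ ^ 2 * distortion P α)
      ≤ ρ * ((3 ^ ℓ - 1) * (ρ ^ 2 / 6) + ρ ^ 2 * (5 / 54)) := by gcongr
    _ = 13 / 54 * ρ ^ 2 - 2 / 27 * (3 ^ ℓ + 1) * ρ ^ 3 := by
        linear_combination 13 / 54 * ρ ^ 2 * count
    _ ≤ _ := by gcongr

theorem distortion_pair_le (hP : IsRMeasure P) :
    distortion P {Smap 2 center, midpoint ℝ (Smap 0 center) (Smap 1 center)} ≤ 5 / 54 := by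
  set β : Set E2 := {Smap 2 center, midpoint ℝ (Smap 0 center) (Smap 1 center)}
  have third (j : Fin 3) {a : E2} (ha : a ∈ β) :
      ∫ x, Metric.infDist (Smap j x) β ^ 2 ∂P ≤ 1 / 54 + ‖Smap j center - a‖ ^ 2 := by
    rw [show (1 / 54 : ℝ) = 3⁻¹ ^ 2 * (1 / 6) by norm_num, ← hP.integral_norm_sub_center_sq,
      ← hP.integral_norm_sub_sq_of_isHomothety (isHomothety_Smap j)]
    have hcont := (isHomothety_Smap j).continuous
    refine integral_mono (hP.integrable ((continuous_infDist_sq β).comp hcont))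
      (hP.integrable (by fun_prop)) fun x => ?_
    rw [← dist_eq_norm]
    exact pow_le_pow_left₀ Metric.infDist_nonneg (Metric.infDist_le_dist_of_mem ha) 2
  have gap : ‖Smap 0 center - Smap 1 center‖ = 2 / 3 := by
    rw [Smap_eq, Smap_eq, add_sub_add_left_eq_sub, ← smul_sub, norm_smul,
      norm_vertex_sub_vertex (by decide)]
    norm_num
  have h0 := third 0 (.inr rfl)
  have h1 := third 1 (.inr rfl)
  have h2 := third 2 (.inl rfl)
  rw [← dist_eq_norm, dist_left_midpoint, dist_eq_norm, gap] at h0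
  rw [← dist_eq_norm, dist_right_midpoint, dist_eq_norm, gap] at h1
  rw [sub_self, norm_zero] at h2
  rw [distortion, hP.integral_eq_sum_integral_comp_Smap (hP.integrable (continuous_infDist_sq β)),
    Fin.sum_univ_three, smul_eq_mul]
  norm_num at h0 h1
  linarith

theorem nonempty_and_distortion_le_of_isOptimal_two (hP : IsRMeasure P) {α : Set E2}
    (hα : IsOptimal P 2 α) : α.Nonempty ∧ distortion P α ≤ 5 / 54 := by
  obtain ⟨hfin, -, hopt⟩ := hα
  set β : Set E2 := {Smap 2 center, midpoint ℝ (Smap 0 center) (Smap 1 center)}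
  have hβ : β.Finite := Set.toFinite β
  have hcard : β.ncard ≤ 2 := (Set.ncard_insert_le _ _).trans_eq (by rw [Set.ncard_singleton])
  have err_le : err P α ≤ ENNReal.ofReal (5 / 54) := calc
    err P α ≤ err P β := hopt.trans_le (iInf₂_le β ⟨hβ, hcard⟩)
    _ = ENNReal.ofReal (distortion P β) := hP.err_eq hβ ⟨_, .inl rfl⟩
    _ ≤ _ := ENNReal.ofReal_le_ofReal hP.distortion_pair_le
  have hne : α.Nonempty := by
    by_contra hempty
    rw [Set.not_nonempty_iff_eq_empty.mp hempty, err_empty, top_le_iff] at err_le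
    exact ENNReal.ofReal_ne_top err_le
  refine ⟨hne, ?_⟩
  rwa [hP.err_eq hfin hne, ENNReal.ofReal_le_ofReal_iff (by norm_num)] at err_le

end IsRMeasure

theorem isOptimal_of_forall_err_le {μ : Measure E2} {n : ℕ} {α : Set E2} (hα : α.Finite)
    (hcard : α.ncard ≤ n) (h : ∀ β : Set E2, β.Finite → β.ncard ≤ n → err μ α ≤ err μ β) :
    IsOptimal μ n α :=
  ⟨hα, hcard, le_antisymm (le_iInf₂ fun β hβ => h β hβ.1 hβ.2) (iInf₂_le α ⟨hα, hcard⟩)⟩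

/-- For n = 3^ℓ + 1 (ℓ ≥ 1), any word τ ∈ {1,2,3}^ℓ and any optimal set of two-means α₂,
the set {S_ω(c) : ω ∈ {1,2,3}^ℓ, ω ≠ τ} ∪ S_τ(α₂) is an optimal set of n-means for the
R-measure P, where c = (1/2, √3/6). -/
theorem stmt_12 (P : Measure E2) [IsProbabilityMeasure P]
    (hP : P = (3 : ℝ≥0∞)⁻¹ • (P.map S1 + P.map S2 + P.map S3))
    (ℓ : ℕ) (hℓ : 1 ≤ ℓ) (τ : Fin ℓ → Fin 3) (α₂ : Set E2) (hα₂ : IsOptimal P 2 α₂) :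
    IsOptimal P (3 ^ ℓ + 1)
      ((fun ω : Fin ℓ → Fin 3 => Sword ω (pt (1/2) (Real.sqrt 3 / 6))) '' {ω | ω ≠ τ}
        ∪ Sword τ '' α₂) := by
  have hRM : IsRMeasure P := by rwa [IsRMeasure, Fin.sum_univ_three]
  obtain ⟨hne, two_means⟩ := hRM.nonempty_and_distortion_le_of_isOptimal_two hα₂
  obtain ⟨hfin, hcard₂, -⟩ := hα₂
  have hcard : (refinedCenters τ α₂).ncard ≤ 3 ^ ℓ + 1 := by
    linarith [ncard_refinedCenters_add_one_le τ hfin]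
  refine isOptimal_of_forall_err_le (finite_refinedCenters τ hfin) hcard fun β hβ hβcard => ?_
  rcases β.eq_empty_or_nonempty with rfl | hβne
  · rw [err_empty]
    exact le_top
  calc err P (refinedCenters τ α₂)
      = ENNReal.ofReal (distortion P (refinedCenters τ α₂)) :=
        hRM.err_eq (finite_refinedCenters τ hfin) (nonempty_refinedCenters τ hne)
    _ ≤ ENNReal.ofReal (distortion P β) := ENNReal.ofReal_le_ofReal <|
        hRM.distortion_refinedCenters_le_distortion τ hfin hne two_means hβ hβne hβcard
    _ = err P β := (hRM.err_eq hβ hβne).symm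

end
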